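/- Consider the group with action (ℤ, ε) where ℤ is the additive group of integers and x^y = (-1)^y · x. Then the n-th term of the lower central series of (ℤ, ε) is G_n = 2^{n-1}ℤ for every n ≥ 1. -/

import Mathlib

/-!
Write `G_{n+1} = lcs n`. By strong induction `G_{n+2} = lcs (n + 1)` is the sum of the commutators
`[2^i ℤ, 2^(n-i) ℤ]`, `0 ≤ i ≤ n`.

* Every such commutator lies in `2^(n+1) ℤ` (`commObj_subset`): a bracket `-a + (-1)^b a` is `0` for
  even `b` and `-2a` for odd `b`, and `b ∈ 2^(n-i) ℤ` can only be odd when `i = n`, in which case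
  `-2a ∈ 2^(n+1) ℤ`. Moreover `2^(n+1) ℤ` cuts out an ideal in any subobject, its elements being
  even and hence acting trivially.
* Conversely each element `2^(n+1) k` is the bracket `[-2^n k, 1]`, so the summand `i = n` is
  already all of `2^(n+1) ℤ`.
-/

/-- A group with action on itself: a (not necessarily abelian, additively written)
group `G` with a map `ε : G × G → G`, `ε g h = g ^ h =: act g h`, satisfying the axioms. -/
structure GwA (G : Type*) [AddGroup G] where
  act : G → G → G
  act_add : ∀ g h k : G, act g (h + k) = act (act g h) k
  act_zero : ∀ g : G, act g 0 = g
  add_act : ∀ g g' h : G, act (g + g') h = act g h + act g' h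
  zero_act : ∀ h : G, act 0 h = 0

namespace GwA

variable {G : Type*} [AddGroup G]

def IsSubobject (ε : GwA G) (H : Set G) : Prop :=
  (0 : G) ∈ H ∧ (∀ a b, a ∈ H → b ∈ H → a + b ∈ H) ∧ (∀ a, a ∈ H → -a ∈ H) ∧
    (∀ a b, a ∈ H → b ∈ H → ε.act a b ∈ H)

def IsIdeal (ε : GwA G) (A : Set G) : Prop :=
  A.Nonempty ∧ (∀ a b, a ∈ A → b ∈ A → a + b ∈ A) ∧ (∀ a, a ∈ A → -a ∈ A) ∧
    (∀ (g : G) a, a ∈ A → -g + a + g ∈ A) ∧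
    (∀ a ∈ A, ∀ g : G, ε.act a g ∈ A) ∧
    (∀ a ∈ A, ∀ g : G, -g + ε.act g a ∈ A)

/-- `I` is an ideal of the subobject `S`. -/
def IsIdealIn (ε : GwA G) (S I : Set G) : Prop :=
  I ⊆ S ∧ I.Nonempty ∧ (∀ a b, a ∈ I → b ∈ I → a + b ∈ I) ∧ (∀ a, a ∈ I → -a ∈ I) ∧
    (∀ s ∈ S, ∀ a ∈ I, -s + a + s ∈ I) ∧
    (∀ a ∈ I, ∀ s ∈ S, ε.act a s ∈ I) ∧
    (∀ a ∈ I, ∀ s ∈ S, -s + ε.act s a ∈ I)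

/-- Subobject generated by a set. -/
def subGen (ε : GwA G) (X : Set G) : Set G := ⋂₀ {H | ε.IsSubobject H ∧ X ⊆ H}

/-- Ideal of the subobject `S` generated by a set. -/
def idealGenIn (ε : GwA G) (S X : Set G) : Set G := ⋂₀ {I | ε.IsIdealIn S I ∧ X ⊆ I}

/-- `[g, g'] = -g + g^(g')`. -/
def bracket (ε : GwA G) (a b : G) : G := -a + ε.act a b

/-- `(g, g') = -g - g' + g + g'`. -/
def gcomm (a b : G) : G := -a - b + a + b

/-- Commutator `[A, B]` of two subobjects. -/
def commObj (ε : GwA G) (A B : Set G) : Set G :=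
  ε.idealGenIn (ε.subGen (A ∪ B))
    {x | ∃ a ∈ A, ∃ b ∈ B, x = ε.bracket a b ∨ x = ε.bracket b a ∨ x = gcomm a b}

/-- `A + B = {a + b : a ∈ A, b ∈ B}`. -/
def setSum (A B : Set G) : Set G := {x | ∃ a ∈ A, ∃ b ∈ B, x = a + b}

/-- Sum of a finite family of subsets of `G`. -/
def finSum : ∀ {m : ℕ}, (Fin m → Set G) → Set G
  | 0, _ => {0}
  | m + 1, f => setSum (finSum fun i : Fin m => f i.castSucc) (f (Fin.last m))

/-- Lower central series, 0-indexed: `lcs ε n = G_{n+1}`, so `lcs ε 0 = G₁ = G` and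
`G_n = [G₁,G_{n-1}] + [G₂,G_{n-2}] + ⋯ + [G_{n-1},G₁]`. -/
def lcs (ε : GwA G) : ℕ → Set G
  | 0 => Set.univ
  | n + 1 => finSum fun i : Fin (n + 1) => ε.commObj (ε.lcs i.val) (ε.lcs (n - i.val))
  decreasing_by
  · exact i.isLt
  · omega

/-- Center of a group with action. -/
def center (ε : GwA G) : Set G :=
  {g | ∀ h : G, g + h = h + g ∧ ε.act g h = g ∧ ε.act h g = h}

/-- Condition 1. -/
def Cond1 (ε : GwA G) : Prop :=
  ∀ x y z : G,
    x - ε.act x (ε.act z x) + ε.act x (y + ε.act z x) - x + ε.act x z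
      - ε.act x (z + ε.act y z) = 0

end GwA

namespace GwA

section General

variable {G : Type*} [AddGroup G]

theorem subset_subGen (ε : GwA G) (X : Set G) : X ⊆ ε.subGen X :=
  fun _ hx _ hH => hH.2 hx

theorem isSubobject_subGen (ε : GwA G) (X : Set G) : ε.IsSubobject (ε.subGen X) :=
  ⟨fun _ hH => hH.1.1,
    fun a b ha hb H hH => hH.1.2.1 a b (ha H hH) (hb H hH),
    fun a ha H hH => hH.1.2.2.1 a (ha H hH),
    fun a b ha hb H hH => hH.1.2.2.2 a b (ha H hH) (hb H hH)⟩

theorem zero_mem_commObj (ε : GwA G) (A B : Set G) : (0 : G) ∈ ε.commObj A B := by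
  rintro I ⟨⟨-, ⟨a, ha⟩, hadd, hneg, -⟩, -⟩
  simpa using hadd a (-a) ha (hneg a ha)

theorem zero_mem_finSum : ∀ {m : ℕ} (f : Fin m → Set G), (∀ i, (0 : G) ∈ f i) →
    (0 : G) ∈ finSum f
  | 0, _, _ => rfl
  | _ + 1, _, h => ⟨0, zero_mem_finSum _ fun i => h i.castSucc, 0, h _, (add_zero 0).symm⟩

theorem finSum_subset (H : AddSubgroup G) : ∀ {m : ℕ} (f : Fin m → Set G),
    (∀ i, f i ⊆ H) → finSum f ⊆ H
  | 0, _, _ => by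
    rintro x rfl
    exact H.zero_mem
  | _ + 1, _, h => by
    rintro x ⟨a, ha, b, hb, rfl⟩
    exact H.add_mem (finSum_subset H _ (fun i => h i.castSucc) ha) (h _ hb)

end General

section SignAction

variable {ε : GwA ℤ}

theorem act_of_even (hε : ∀ x y : ℤ, ε.act x y = (((-1 : ℤˣ) ^ y : ℤˣ) : ℤ) * x)
    {y : ℤ} (hy : Even y) (x : ℤ) : ε.act x y = x := by
  rw [hε, hy.neg_one_zpow]
  simp

theorem act_of_odd (hε : ∀ x y : ℤ, ε.act x y = (((-1 : ℤˣ) ^ y : ℤˣ) : ℤ) * x)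
    {y : ℤ} (hy : Odd y) (x : ℤ) : ε.act x y = -x := by
  obtain ⟨k, rfl⟩ := hy
  rw [hε, zpow_add, (even_two_mul k).neg_one_zpow]
  simp

theorem dvd_bracket (hε : ∀ x y : ℤ, ε.act x y = (((-1 : ℤˣ) ^ y : ℤˣ) : ℤ) * x)
    {i j : ℕ} {a b : ℤ} (ha : (2 : ℤ) ^ i ∣ a) (hb : (2 : ℤ) ^ j ∣ b) :
    (2 : ℤ) ^ (i + j + 1) ∣ ε.bracket a b := by
  unfold bracket
  rcases Int.even_or_odd b with h | h
  · simp [act_of_even hε h]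
  -- An odd `b` forces `j = 0`.
  · rcases Nat.eq_zero_or_pos j with rfl | hj
    · obtain ⟨c, rfl⟩ := ha
      rw [act_of_odd hε h]
      exact ⟨-c, by ring⟩
    · have h2 : (2 : ℤ) ∣ b := (dvd_pow_self 2 hj.ne').trans hb
      exact absurd (even_iff_two_dvd.mpr h2) (Int.not_even_iff_odd.mpr h)

theorem commObj_subset (hε : ∀ x y : ℤ, ε.act x y = (((-1 : ℤˣ) ^ y : ℤˣ) : ℤ) * x)
    (i j : ℕ) :
    ε.commObj {x | (2 : ℤ) ^ i ∣ x} {x | (2 : ℤ) ^ j ∣ x} ⊆ {x | (2 : ℤ) ^ (i + j + 1) ∣ x} := by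
  intro x hx
  set X : Set ℤ := {x | (2 : ℤ) ^ i ∣ x} ∪ {x | (2 : ℤ) ^ j ∣ x}
  obtain ⟨h0, hadd, hneg, hact⟩ := ε.isSubobject_subGen X
  -- An ideal of the subobject must lie inside it, hence the intersection.
  refine (hx (ε.subGen X ∩ {x | (2 : ℤ) ^ (i + j + 1) ∣ x}) ⟨⟨Set.inter_subset_left,
    ⟨0, h0, dvd_zero _⟩, fun a b ha hb => ⟨hadd a b ha.1 hb.1, dvd_add ha.2 hb.2⟩,
    fun a ha => ⟨hneg a ha.1, (dvd_neg).mpr ha.2⟩, ?_, ?_, ?_⟩, ?_⟩).2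
  · intro s _ a ha
    simpa using ha
  · intro a ha s hs
    refine ⟨hact a s ha.1 hs, ?_⟩
    rw [hε]
    exact Dvd.dvd.mul_left ha.2 _
  · intro a ha s _
    have h2 : Even a := even_iff_two_dvd.mpr ((dvd_pow_self 2 (Nat.succ_ne_zero _)).trans ha.2)
    rw [act_of_even hε h2, neg_add_cancel]
    exact ⟨h0, dvd_zero _⟩
  · rintro y ⟨a, ha, b, hb, hy⟩
    have ha' : a ∈ ε.subGen X := ε.subset_subGen X (Or.inl ha)
    have hb' : b ∈ ε.subGen X := ε.subset_subGen X (Or.inr hb)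
    rcases hy with rfl | rfl | rfl
    · exact ⟨hadd _ _ (hneg _ ha') (hact _ _ ha' hb'), dvd_bracket hε ha hb⟩
    · refine ⟨hadd _ _ (hneg _ hb') (hact _ _ hb' ha'), ?_⟩
      rw [add_comm i j]
      exact dvd_bracket hε hb ha
    · have : gcomm a b = 0 := by
        unfold gcomm
        ring
      rw [this]
      exact ⟨h0, dvd_zero _⟩

/-- The reverse inclusion for the single summand `[G_{n+1}, G_1]`; here `{x | 2 ^ 0 ∣ x}` is all
of `ℤ`. -/
theorem subset_commObj_univ (hε : ∀ x y : ℤ, ε.act x y = (((-1 : ℤˣ) ^ y : ℤˣ) : ℤ) * x)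
    (n : ℕ) :
    {x | (2 : ℤ) ^ (n + 1) ∣ x} ⊆ ε.commObj {x | (2 : ℤ) ^ n ∣ x} {x | (2 : ℤ) ^ 0 ∣ x} := by
  rintro _ ⟨k, rfl⟩ I ⟨-, hI⟩
  refine hI ⟨-(2 ^ n * k), (dvd_neg).mpr (dvd_mul_right _ _), 1, by simp, Or.inl ?_⟩
  rw [bracket, act_of_odd hε odd_one]
  ring

end SignAction

end GwA

/-- For `ℤ` with the action `x^y = (-1)^y * x`, the `n`-th term of the
lower central series is `G_n = 2^(n-1) ℤ` for all `n ≥ 1` (here `lcs ε k = G_{k+1}`,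
so `lcs ε k = 2^k ℤ` for all `k`). -/
theorem gwa_int_sign_action_lcs (ε : GwA ℤ)
    (hε : ∀ x y : ℤ, ε.act x y = (((-1 : ℤˣ) ^ y : ℤˣ) : ℤ) * x) :
    ∀ n : ℕ, ε.lcs n = {x : ℤ | (2 : ℤ) ^ n ∣ x} := by
  intro n
  induction n using Nat.strong_induction_on with
  | _ n ih =>
    cases n with
    | zero => simp [GwA.lcs]
    | succ n =>
      rw [GwA.lcs]
      apply Set.Subset.antisymm
      · have h := GwA.finSum_subset (AddSubgroup.zmultiples ((2 : ℤ) ^ (n + 1)))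
          (fun i : Fin (n + 1) => ε.commObj (ε.lcs i.val) (ε.lcs (n - i.val))) ?_
        · intro x hx
          exact Int.mem_zmultiples_iff.mp (h hx)
        · intro i x hx
          have hx' : x ∈ ε.commObj (ε.lcs i.val) (ε.lcs (n - i.val)) := hx
          rw [ih i.val i.isLt, ih (n - i.val) (by omega)] at hx'
          have h := GwA.commObj_subset hε _ _ hx'
          rw [Nat.add_sub_cancel' (Nat.le_of_lt_succ i.isLt)] at h
          exact Int.mem_zmultiples_iff.mpr h
      · intro x hx
        refine ⟨0, GwA.zero_mem_finSum _ fun i => ε.zero_mem_commObj _ _, x, ?_, (zero_add x).symm⟩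
        simp only [Fin.val_last, Nat.sub_self]
        rw [ih n (Nat.lt_succ_self n), ih 0 (Nat.succ_pos n)]
        exact GwA.subset_commObj_univ hε n hx
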